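/- For every n ≥ 2, the minimum size of a nondeterministic U_2-circuit computing the parity function Parity_n equals 3(n-1); that is, size^ndc(Parity_n) = 3(n-1). In particular, nondeterminism cannot reduce the U_2-circuit size of the parity function below the deterministic optimum 3(n-1). -/

import Mathlib

/-!
A chain of `n - 1` three-gate XOR blocks computes parity. Conversely, gate elimination shows that
each variable but one costs three gates.

In a smallest circuit, the first gate `g` has a variable `i` as an input. Some second gate uses `i`:
otherwise, at every accepting pair, the other input of `g` must not control `g`, since a flip of
variable `i` has to reach the output. That input cannot be a variable, for it could be fixed to
its controlling value; hence it is a function of the guess, and excluding the guesses for which it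
is controlling loses no accepting pair but makes `g` superfluous.

Now fix variable `i` to the value that makes `g` constant. Both gates using `i` become superfluous,
and so does a third one, fed by a gate that became constant.

A restriction only shrinks the domain of the functions computed by the gates. These functions can
therefore stay the same throughout, while superfluous gates are replaced by unary functions of other
sources. Only that parity is negated by every flip of a variable enters the argument.
-/

/-- A Boolean circuit with input index type `ι`. It is given as a straight-line
program: each gate has fan-in 2, and each of its two incoming wires comes from
an input node (a variable in `ι` or a Boolean constant) or from an earlier gate.
The output is a designated node (an input node or a gate). -/
structure Circuit (ι : Type) : Type where
  size : ℕ
  gate : Fin size → Bool → Bool → Bool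
  in1 : (g : Fin size) → (ι ⊕ Bool) ⊕ Fin g.val
  in2 : (g : Fin size) → (ι ⊕ Bool) ⊕ Fin g.val
  out : (ι ⊕ Bool) ⊕ Fin size

namespace Circuit

variable {ι : Type}

/-- The value carried by the output of gate `g` on input assignment `x`. -/
def nodeVal (C : Circuit ι) (x : ι → Bool) : (g : Fin C.size) → Bool
  | g =>
    C.gate g
      (match C.in1 g with
       | .inl (.inl i) => x i
       | .inl (.inr b) => b
       | .inr h => C.nodeVal x ⟨h.val, h.isLt.trans g.isLt⟩)
      (match C.in2 g with
       | .inl (.inl i) => x i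
       | .inl (.inr b) => b
       | .inr h => C.nodeVal x ⟨h.val, h.isLt.trans g.isLt⟩)
  termination_by g => g.val
  decreasing_by all_goals exact h.isLt

/-- The output value of the circuit on input assignment `x`. -/
def eval (C : Circuit ι) (x : ι → Bool) : Bool :=
  match C.out with
  | .inl (.inl i) => x i
  | .inl (.inr b) => b
  | .inr g => C.nodeVal x g

end Circuit

/-- A two-input Boolean function is in `U₂` iff it is neither XOR nor XNOR. -/
def IsU2 (f : Bool → Bool → Bool) : Prop :=
  f ≠ xor ∧ f ≠ fun a b => !(xor a b)

/-- A `U₂`-circuit: every gate is labeled by a function in `U₂`. -/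
def Circuit.IsU2Circuit {ι : Type} (C : Circuit ι) : Prop :=
  ∀ g, IsU2 (C.gate g)

/-- A deterministic circuit computes `f` if it outputs `f x` on every input `x`. -/
def Circuit.Computes {n : ℕ} (C : Circuit (Fin n)) (f : (Fin n → Bool) → Bool) : Prop :=
  ∀ x, C.eval x = f x

/-- A nondeterministic circuit (with `n` actual inputs and `m` guess inputs)
computes `f` if for every actual input `x`, `f x = 1` iff some setting of the
guess inputs makes the circuit output `1`. -/
def Circuit.ComputesND {n m : ℕ} (C : Circuit (Fin n ⊕ Fin m))
    (f : (Fin n → Bool) → Bool) : Prop :=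
  ∀ x, f x = true ↔ ∃ y : Fin m → Bool, C.eval (Sum.elim x y) = true

/-- `sizeDC f`: the size of the smallest deterministic `U₂`-circuit computing `f`. -/
noncomputable def sizeDC {n : ℕ} (f : (Fin n → Bool) → Bool) : ℕ :=
  sInf {s | ∃ C : Circuit (Fin n), C.IsU2Circuit ∧ C.Computes f ∧ C.size = s}

/-- `sizeNDC f`: the size of the smallest nondeterministic `U₂`-circuit computing `f`. -/
noncomputable def sizeNDC {n : ℕ} (f : (Fin n → Bool) → Bool) : ℕ :=
  sInf {s | ∃ m : ℕ, ∃ C : Circuit (Fin n ⊕ Fin m),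
    C.IsU2Circuit ∧ C.ComputesND f ∧ C.size = s}

/-- `Parity_n`. -/
def parity (n : ℕ) (x : Fin n → Bool) : Bool :=
  decide ((∑ i, (x i).toNat) % 2 = 1)

/-! ### Parity circuits -/

namespace Circuit

variable {ι : Type} (C : Circuit ι)

/-- The value carried by a wire whose source is an input node or one of the first `k` gates. -/
def wireVal {k : ℕ} (hk : k ≤ C.size) (x : ι → Bool) : (ι ⊕ Bool) ⊕ Fin k → Bool :=
  Sum.elim (Sum.elim x id) fun h => C.nodeVal x (h.castLE hk)

theorem nodeVal_eq_gate_wireVal (x : ι → Bool) (g : Fin C.size) :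
    C.nodeVal x g =
      C.gate g (C.wireVal g.isLt.le x (C.in1 g)) (C.wireVal g.isLt.le x (C.in2 g)) := by
  rw [nodeVal]
  congr 1
  · rcases C.in1 g with (i | b) | h <;> rfl
  · rcases C.in2 g with (i | b) | h <;> rfl

theorem eval_eq_wireVal_out (x : ι → Bool) : C.eval x = C.wireVal le_rfl x C.out := by
  rw [eval]
  rcases C.out with (i | b) | h <;> rfl

/-- The circuit obtained from `C` by appending one gate, which becomes the output. -/
abbrev snoc (f : Bool → Bool → Bool) (w₁ w₂ : (ι ⊕ Bool) ⊕ Fin C.size) : Circuit ι where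
  size := C.size + 1
  gate := Fin.snoc (α := fun _ => Bool → Bool → Bool) C.gate f
  in1 := Fin.lastCases (motive := fun g => (ι ⊕ Bool) ⊕ Fin g.val) w₁ C.in1
  in2 := Fin.lastCases (motive := fun g => (ι ⊕ Bool) ⊕ Fin g.val) w₂ C.in2
  out := .inr (Fin.last C.size)

section snoc

variable {C} {f : Bool → Bool → Bool} {w₁ w₂ : (ι ⊕ Bool) ⊕ Fin C.size}

theorem IsU2Circuit.snoc (hC : C.IsU2Circuit) (hf : IsU2 f) : (C.snoc f w₁ w₂).IsU2Circuit := by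
  refine Fin.lastCases ?_ fun g => ?_
  · simpa [Circuit.snoc] using hf
  · simpa [Circuit.snoc] using hC g

theorem nodeVal_snoc_castSucc (x : ι → Bool) (g : Fin C.size) :
    (C.snoc f w₁ w₂).nodeVal x g.castSucc = C.nodeVal x g := by
  induction g using WellFoundedLT.induction with
  | _ g ih =>
    have wireVal_eq (w : (ι ⊕ Bool) ⊕ Fin g.val) :
        (C.snoc f w₁ w₂).wireVal g.castSucc.isLt.le x w = C.wireVal g.isLt.le x w := by
      rcases w with w | h
      · rfl
      · exact ih (h.castLE g.isLt.le) h.isLt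
    rw [nodeVal_eq_gate_wireVal, nodeVal_eq_gate_wireVal, ← wireVal_eq, ← wireVal_eq]
    simp [snoc]

theorem wireVal_snoc_map_castSucc (x : ι → Bool) (w : (ι ⊕ Bool) ⊕ Fin C.size) :
    (C.snoc f w₁ w₂).wireVal le_rfl x (w.map id Fin.castSucc) = C.wireVal le_rfl x w := by
  rcases w with w | g
  · rfl
  · exact nodeVal_snoc_castSucc x g

theorem eval_snoc (x : ι → Bool) :
    (C.snoc f w₁ w₂).eval x = f (C.wireVal le_rfl x w₁) (C.wireVal le_rfl x w₂) := by
  have wireVal_eq (w : (ι ⊕ Bool) ⊕ Fin C.size) :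
      (C.snoc f w₁ w₂).wireVal (Nat.le_succ _) x w = C.wireVal le_rfl x w := by
    rcases w with w | g
    · rfl
    · exact nodeVal_snoc_castSucc x g
  change (C.snoc f w₁ w₂).nodeVal x (Fin.last C.size) = _
  rw [nodeVal_eq_gate_wireVal, ← wireVal_eq, ← wireVal_eq]
  simp [snoc]

end snoc

variable {C}

theorem IsU2Circuit.exists_xor_input (hC : C.IsU2Circuit) (i : ι) :
    ∃ C' : Circuit ι, C'.IsU2Circuit ∧ C'.size = C.size + 3 ∧
      ∀ x, C'.eval x = xor (C.eval x) (x i) := by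
  let C₁ := C.snoc (fun a b => a && !b) C.out (.inl (.inl i))
  let C₂ := C₁.snoc (fun a b => !a && b) (C.out.map id Fin.castSucc) (.inl (.inl i))
  let C₃ := C₂.snoc or (C₁.out.map id Fin.castSucc) C₂.out
  refine ⟨C₃, ((hC.snoc ?_).snoc ?_).snoc ?_, rfl, fun x => ?_⟩
  iterate 3 exact ⟨by decide, by decide⟩
  have eval_C₁ : C₁.eval x = (C.eval x && !x i) := by
    rw [eval_snoc, ← eval_eq_wireVal_out]; rfl
  have eval_C₂ : C₂.eval x = (!C.eval x && x i) := by
    rw [eval_snoc, wireVal_snoc_map_castSucc, ← eval_eq_wireVal_out]; rfl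
  rw [eval_snoc, wireVal_snoc_map_castSucc, ← eval_eq_wireVal_out, ← eval_eq_wireVal_out, eval_C₁,
    eval_C₂]
  cases C.eval x <;> cases x i <;> rfl

end Circuit

/-- The parity of the bits of `x` indexed by `s`, so that `parity n` is `parityOn Finset.univ`. -/
def parityOn {ι : Type*} (s : Finset ι) (x : ι → Bool) : Bool :=
  decide ((∑ i ∈ s, (x i).toNat) % 2 = 1)

theorem parityOn_singleton {ι : Type*} (i : ι) (x : ι → Bool) : parityOn {i} x = x i := by
  cases h : x i <;> simp [parityOn, h]

theorem parityOn_cons {ι : Type*} {s : Finset ι} {i : ι} (hi : i ∉ s) (x : ι → Bool) :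
    parityOn (s.cons i hi) x = xor (parityOn s x) (x i) := by
  have h := Nat.mod_two_eq_zero_or_one (∑ j ∈ s, (x j).toNat)
  rcases h with h | h <;> cases hx : x i <;> simp [parityOn, Nat.add_mod, h, hx]

theorem Circuit.exists_eval_eq_parityOn {ι : Type} {s : Finset ι} (hs : s.Nonempty) :
    ∃ C : Circuit ι, C.IsU2Circuit ∧ C.size = 3 * (s.card - 1) ∧ ∀ x, C.eval x = parityOn s x := by
  induction hs using Finset.Nonempty.cons_induction with
  | singleton i =>
    exact ⟨⟨0, Fin.elim0, (Fin.elim0 ·), (Fin.elim0 ·), .inl (.inl i)⟩, fun g => g.elim0, rfl,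
      fun x => (parityOn_singleton i x).symm⟩
  | cons i s hi hs ih =>
    obtain ⟨C, hU, hsize, hC⟩ := ih
    obtain ⟨C', hU', hsize', hC'⟩ := hU.exists_xor_input i
    refine ⟨C', hU', ?_, fun x => by rw [hC', hC, parityOn_cons]⟩
    have := hs.card_pos
    rw [hsize', hsize, Finset.card_cons]
    omega

/-! ### Functions in `U₂` -/

namespace IsU2

variable {φ : Bool → Bool → Bool}

theorem swap (hφ : IsU2 φ) : IsU2 fun a b => φ b a := by
  unfold IsU2 at *
  revert φ
  decide

theorem comp_unary (hφ : IsU2 φ) (ψ₁ ψ₂ : Bool → Bool) : IsU2 fun a b => φ (ψ₁ a) (ψ₂ b) := by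
  unfold IsU2 at *
  revert φ ψ₁ ψ₂
  decide

theorem exists_const_or_eq_snd (hφ : IsU2 φ) :
    (∃ b c, ∀ a, φ b a = c) ∨ ∃ ψ : Bool → Bool, ∀ a b, φ a b = ψ b := by
  unfold IsU2 at hφ
  revert φ
  decide

end IsU2

/-! ### Boolean chains with guesses -/

variable {ι Y G : Type*}

/-- An input of a gate in a nondeterministic circuit: a variable, an earlier gate, or an arbitrary
function of the guess. Functions of the guess are free of charge, since they persist under every
restriction of the variables. -/
inductive GateSource (ι Y G : Type*)
  | var (i : ι)
  | guess (h : Y → Bool)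
  | gate (k : G)

namespace GateSource

instance : Inhabited (GateSource ι Y G) := ⟨guess fun _ => false⟩

/-- The value of a source, given the functions `v` computed by the gates. -/
def val (v : G → (ι → Bool) × Y → Bool) : GateSource ι Y G → (ι → Bool) × Y → Bool
  | var i, p => p.1 i
  | guess h, p => h p.2
  | gate k, p => v k p

/-- The source only refers to variables in `T` and gates in `A`. -/
def IsOver (T : Finset ι) (A : Set G) : GateSource ι Y G → Prop
  | var i => i ∈ T
  | guess _ => True
  | gate k => k ∈ A

theorem IsOver.mono {T : Finset ι} {A B : Set G} {s : GateSource ι Y G} (hs : s.IsOver T A)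
    (hAB : A ⊆ B) : s.IsOver T B := by
  cases s with
  | var i => exact hs
  | guess h => trivial
  | gate k => exact hAB hs

end GateSource

/-- The functions that on the domain `D` agree with a unary function of a single source over `T`
and `A`. Unary functions include the constants and the negation. -/
def availableOn (v : G → (ι → Bool) × Y → Bool) (D : Set ((ι → Bool) × Y)) (T : Finset ι)
    (A : Set G) : Set ((ι → Bool) × Y → Bool) :=
  {f | ∃ (ψ : Bool → Bool) (s : GateSource ι Y G),
    s.IsOver T A ∧ Set.EqOn f (fun p => ψ (s.val v p)) D}

section availableOn

variable {v : G → (ι → Bool) × Y → Bool} {D D' : Set ((ι → Bool) × Y)} {T T' : Finset ι}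
  {A B : Set G} {f : (ι → Bool) × Y → Bool}

theorem mem_availableOn_mono (hf : f ∈ availableOn v D T A) (hAB : A ⊆ B) :
    f ∈ availableOn v D T B :=
  let ⟨ψ, s, hs, hfs⟩ := hf
  ⟨ψ, s, hs.mono hAB, hfs⟩

theorem mem_availableOn_of_eqOn_const {c : Bool} (hf : Set.EqOn f (fun _ => c) D) :
    f ∈ availableOn v D T A :=
  ⟨fun _ => c, default, trivial, hf⟩

theorem GateSource.IsOver.val_mem_availableOn {s : GateSource ι Y G} (hs : s.IsOver T A) :
    s.val v ∈ availableOn v D T A :=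
  ⟨id, s, hs, fun _ _ => rfl⟩

theorem mem_availableOn_trans (hf : f ∈ availableOn v D T A) (hD : D' ⊆ D)
    (hvar : ∀ i ∈ T, (fun p => p.1 i) ∈ availableOn v D' T' B)
    (hgate : ∀ k ∈ A, v k ∈ availableOn v D' T' B) : f ∈ availableOn v D' T' B := by
  obtain ⟨ψ, s, hs, hf⟩ := hf
  obtain ⟨ψ', s', hs', hss'⟩ : s.val v ∈ availableOn v D' T' B := by
    cases s with
    | var i => exact hvar i hs
    | guess h => exact GateSource.IsOver.val_mem_availableOn (s := .guess h) trivial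
    | gate k => exact hgate k hs
  exact ⟨ψ ∘ ψ', s', hs', fun p hp => by simp [hf (hD hp), hss' hp]⟩

end availableOn

/-- A wiring on the domain `D` of the gates in `K`, which compute the functions `v`: each gate is a
`U₂`-function of two sources over `T` and strictly smaller gates in `K`. Restricting `D` may make
gates superfluous, but it never changes `v`. -/
structure BooleanChain [LT G] (v : G → (ι → Bool) × Y → Bool) (D : Set ((ι → Bool) × Y))
    (T : Finset ι) (K : Finset G) where
  op : G → Bool → Bool → Bool
  left : G → GateSource ι Y G
  right : G → GateSource ι Y G
  isU2_op : ∀ k ∈ K, IsU2 (op k)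
  left_isOver : ∀ k ∈ K, (left k).IsOver T {j ∈ K | j < k}
  right_isOver : ∀ k ∈ K, (right k).IsOver T {j ∈ K | j < k}
  eqOn : ∀ k ∈ K, Set.EqOn (v k) (fun p => op k ((left k).val v p) ((right k).val v p)) D

/-- On `D`, gate `k` can be replaced by a unary function of a variable, of the guess, or of a
smaller gate. -/
def IsRedundant [LT G] (v : G → (ι → Bool) × Y → Bool) (D : Set ((ι → Bool) × Y)) (T : Finset ι)
    (K : Finset G) (k : G) : Prop :=
  v k ∈ availableOn v D T {j ∈ K | j < k}

section sdiff

variable [Preorder G] [DecidableEq G] [WellFoundedLT G] {v : G → (ι → Bool) × Y → Bool}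
  {D D' : Set ((ι → Bool) × Y)} {T T' : Finset ι} {K R : Finset G}

theorem mem_availableOn_sdiff_of_isRedundant
    (hvar : ∀ i ∈ T, (fun p => p.1 i) ∈ availableOn v D' T' (∅ : Set G))
    (hR : ∀ k ∈ R, IsRedundant v D' T K k) {k : G} (hk : k ∈ K) :
    v k ∈ availableOn v D' T' {j ∈ K \ R | j ≤ k} := by
  induction k using WellFoundedLT.induction with
  | _ k ih =>
    by_cases hkR : k ∈ R
    · refine mem_availableOn_trans (hR k hkR) le_rfl
        (fun i hi => mem_availableOn_mono (hvar i hi) (Set.empty_subset _)) fun j hj => ?_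
      exact mem_availableOn_mono (ih j hj.2 hj.1) fun l hl => ⟨hl.1, hl.2.trans hj.2.le⟩
    · exact GateSource.IsOver.val_mem_availableOn (s := .gate k)
        ⟨Finset.mem_sdiff.2 ⟨hk, hkR⟩, le_rfl⟩

theorem mem_availableOn_sdiff {f : (ι → Bool) × Y → Bool} (hf : f ∈ availableOn v D T K)
    (hD : D' ⊆ D) (hvar : ∀ i ∈ T, (fun p => p.1 i) ∈ availableOn v D' T' (∅ : Set G))
    (hR : ∀ k ∈ R, IsRedundant v D' T K k) : f ∈ availableOn v D' T' (K \ R : Finset G) :=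
  mem_availableOn_trans hf hD (fun i hi => mem_availableOn_mono (hvar i hi) (Set.empty_subset _))
    fun _ hk => mem_availableOn_mono (mem_availableOn_sdiff_of_isRedundant hvar hR hk) fun _ hl =>
      hl.1

theorem BooleanChain.nonempty_sdiff (W : BooleanChain v D T K) (hD : D' ⊆ D)
    (hvar : ∀ i ∈ T, (fun p => p.1 i) ∈ availableOn v D' T' (∅ : Set G))
    (hR : ∀ k ∈ R, IsRedundant v D' T K k) : Nonempty (BooleanChain v D' T' (K \ R)) := by
  have rewire {k : G} {s : GateSource ι Y G} (hs : s.IsOver T {j ∈ K | j < k}) :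
      s.val v ∈ availableOn v D' T' {j ∈ K \ R | j < k} :=
    mem_availableOn_trans hs.val_mem_availableOn hD
      (fun i hi => mem_availableOn_mono (hvar i hi) (Set.empty_subset _)) fun j hj =>
        mem_availableOn_mono (mem_availableOn_sdiff_of_isRedundant hvar hR hj.1)
          fun l hl => ⟨hl.1, hl.2.trans_lt hj.2⟩
  choose! ψ₁ s₁ hs₁ hval₁ using fun k hk => rewire (W.left_isOver k hk)
  choose! ψ₂ s₂ hs₂ hval₂ using fun k hk => rewire (W.right_isOver k hk)
  have mem {k : G} (hk : k ∈ K \ R) : k ∈ K := (Finset.mem_sdiff.1 hk).1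
  exact ⟨{
    op := fun k a b => W.op k (ψ₁ k a) (ψ₂ k b)
    left := s₁
    right := s₂
    isU2_op := fun k hk => (W.isU2_op k (mem hk)).comp_unary _ _
    left_isOver := fun k hk => hs₁ k (mem hk)
    right_isOver := fun k hk => hs₂ k (mem hk)
    eqOn := fun k hk p hp => by
      simp only [W.eqOn k (mem hk) (hD hp), hval₁ k (mem hk) hp, hval₂ k (mem hk) hp] }⟩

end sdiff

namespace BooleanChain

variable [Preorder G] {v : G → (ι → Bool) × Y → Bool} {D D' : Set ((ι → Bool) × Y)} {T : Finset ι}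
  {K : Finset G} (W : BooleanChain v D T K) {k l : G} {s t : GateSource ι Y G}

/-- The source `s` is one of the two inputs of gate `k`. -/
def Uses (k : G) (s : GateSource ι Y G) : Prop :=
  W.left k = s ∨ W.right k = s

variable {W}

theorem Uses.isOver (hs : W.Uses k s) (hk : k ∈ K) : s.IsOver T {j ∈ K | j < k} := by
  rcases hs with rfl | rfl
  · exact W.left_isOver k hk
  · exact W.right_isOver k hk

theorem Uses.isOver_empty (hs : W.Uses k s) (hk : Minimal (· ∈ K) k) : s.IsOver T ∅ :=
  (hs.isOver hk.prop).mono fun _ hj => hk.not_lt hj.1 hj.2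

theorem Uses.lt (hl : W.Uses l (.gate k)) (hlK : l ∈ K) : k < l :=
  (hl.isOver hlK).2

theorem Uses.exists_other (hs : W.Uses k s) (hk : k ∈ K) :
    ∃ φ t, IsU2 φ ∧ (∀ r, W.Uses k r ↔ r = s ∨ r = t) ∧
      Set.EqOn (v k) (fun p => φ (s.val v p) (t.val v p)) D := by
  rcases hs with rfl | rfl
  · exact ⟨W.op k, W.right k, W.isU2_op k hk, fun r => by simp only [Uses, eq_comm], W.eqOn k hk⟩
  · exact ⟨fun a b => W.op k b a, W.left k, (W.isU2_op k hk).swap,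
      fun r => by simp only [Uses, eq_comm, or_comm], W.eqOn k hk⟩

theorem Uses.exists_controlling_value (hs : W.Uses k s) (hk : k ∈ K)
    (hred : ¬ IsRedundant v D T K k) : ∃ b c, ∀ p ∈ D, s.val v p = b → v k p = c := by
  obtain ⟨φ, t, hφ, huses, hval⟩ := hs.exists_other hk
  rcases hφ.exists_const_or_eq_snd with ⟨b, c, hbc⟩ | ⟨ψ, hψ⟩
  · exact ⟨b, c, fun p hp hs => by simp only [hval hp, hs, hbc]⟩
  · have ht : W.Uses k t := (huses t).2 (.inr rfl)
    exact absurd ⟨ψ, t, ht.isOver hk, fun p hp => by simp only [hval hp, hψ]⟩ hred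

theorem Uses.isRedundant (hs : W.Uses k s) (hk : k ∈ K) (hD : D' ⊆ D) {c : Bool}
    (hc : Set.EqOn (s.val v) (fun _ => c) D') : IsRedundant v D' T K k := by
  obtain ⟨φ, t, -, huses, hval⟩ := hs.exists_other hk
  have ht : W.Uses k t := (huses t).2 (.inr rfl)
  exact ⟨φ c, t, ht.isOver hk, fun p hp => by simp only [hval (hD hp), hc hp]⟩

theorem Uses.exists_eqOn_const (hs : W.Uses k s) (ht : W.Uses k t) (hst : s ≠ t) (hk : k ∈ K)
    (hD : D' ⊆ D) {b c : Bool} (hb : Set.EqOn (s.val v) (fun _ => b) D')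
    (hc : Set.EqOn (t.val v) (fun _ => c) D') : ∃ d, Set.EqOn (v k) (fun _ => d) D' := by
  obtain ⟨φ, r, -, huses, hval⟩ := hs.exists_other hk
  obtain rfl : t = r := ((huses t).1 ht).resolve_left hst.symm
  exact ⟨φ b c, fun p hp => by simp only [hval (hD hp), hb hp, hc hp]⟩

variable (W) in
theorem nonempty_erase [DecidableEq G] (hk : ∀ l ∈ K, ¬ W.Uses l (.gate k)) :
    Nonempty (BooleanChain v D T (K.erase k)) := by
  have isOver_erase {l : G} {s : GateSource ι Y G} (hl : l ∈ K) (hs : W.Uses l s) :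
      s.IsOver T {j ∈ K.erase k | j < l} := by
    have hover := hs.isOver hl
    cases s with
    | var i => exact hover
    | guess h => trivial
    | gate j =>
      have hjk : j ≠ k := fun h => hk l hl (h ▸ hs)
      exact ⟨Finset.mem_erase.2 ⟨hjk, hover.1⟩, hover.2⟩
  exact ⟨{
    op := W.op
    left := W.left
    right := W.right
    isU2_op := fun l hl => W.isU2_op l (Finset.mem_of_mem_erase hl)
    left_isOver := fun l hl => isOver_erase (Finset.mem_of_mem_erase hl) (.inl rfl)
    right_isOver := fun l hl => isOver_erase (Finset.mem_of_mem_erase hl) (.inr rfl)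
    eqOn := fun l hl => W.eqOn l (Finset.mem_of_mem_erase hl) }⟩

theorem gate_eq_of_forall_ne_not_uses_var [WellFoundedLT G] {i : ι} {g : G} {x x' : ι → Bool}
    {y : Y} (hx : (x, y) ∈ D) (hx' : (x', y) ∈ D) (hxx' : ∀ j ≠ i, x' j = x j)
    (hg : v g (x', y) = v g (x, y)) (hi : ∀ k ∈ K, k ≠ g → ¬ W.Uses k (.var i)) (hk : k ∈ K) :
    v k (x', y) = v k (x, y) := by
  induction k using WellFoundedLT.induction with
  | _ k ih =>
    rcases eq_or_ne k g with rfl | hkg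
    · exact hg
    · have source_eq {s : GateSource ι Y G} (hs : W.Uses k s) :
          s.val v (x', y) = s.val v (x, y) := by
        have hover := hs.isOver hk
        cases s with
        | var j => exact hxx' j fun h => hi k hk hkg (h ▸ hs)
        | guess h => rfl
        | gate j => exact ih j hover.2 hover.1
      simp only [W.eqOn k hk hx, W.eqOn k hk hx', source_eq (.inl rfl), source_eq (.inr rfl)]

end BooleanChain

/-! ### Gate elimination -/

/-- The assignment `x` with its `i`-th bit negated. -/
abbrev flipBit [DecidableEq ι] (x : ι → Bool) (i : ι) : ι → Bool :=
  Function.update x i (!x i)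

theorem GateSource.IsOver.val_flipBit [DecidableEq ι] {v : G → (ι → Bool) × Y → Bool}
    {T : Finset ι} {s : GateSource ι Y G} (hs : s.IsOver T ∅) {i : ι} (hsi : s ≠ .var i)
    (x : ι → Bool) (y : Y) : s.val v (flipBit x i, y) = s.val v (x, y) := by
  cases s with
  | var j => exact Function.update_of_ne (fun hji => hsi (congrArg _ hji)) _ _
  | guess f => rfl
  | gate k => exact absurd hs (Set.notMem_empty k)

/-- Every variable matters at every input. -/
def IsFullySensitive [DecidableEq ι] (P : (ι → Bool) → Bool) : Prop :=
  ∀ x i, P (flipBit x i) = !P x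

/-- The gates in `K` with output `o` compute `P` nondeterministically on `X`, with guesses in `S`.
The set `X` is invariant under flips of the variables in `T`, so that it plays the role of a subcube
in which the variables in `T` are still free. -/
structure IsNDChain [DecidableEq ι] [LT G] (P : (ι → Bool) → Bool) (v : G → (ι → Bool) × Y → Bool)
    (o : (ι → Bool) × Y → Bool) (T : Finset ι) (X : Set (ι → Bool)) (S : Set Y) (K : Finset G) :
    Prop where
  nonempty : X.Nonempty
  flipBit_mem : ∀ x ∈ X, ∀ i ∈ T, flipBit x i ∈ X
  chain : Nonempty (BooleanChain v (X ×ˢ S) T K)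
  output : o ∈ availableOn v (X ×ˢ S) T K
  computes : ∀ x ∈ X, P x = true ↔ ∃ y ∈ S, o (x, y) = true

namespace IsNDChain

variable [DecidableEq ι] {P : (ι → Bool) → Bool} {v : G → (ι → Bool) × Y → Bool}
  {o : (ι → Bool) × Y → Bool} {T : Finset ι} {X : Set (ι → Bool)} {S S' : Set Y} {K : Finset G}
  {i : ι} {x : ι → Bool} {y : Y}

section LT

variable [LT G]

theorem exists_mem (h : IsNDChain P v o T X S K) (hP : IsFullySensitive P) (hT : 1 < T.card)
    (hi : i ∈ T) (b c : Bool) : ∃ x ∈ X, x i = b ∧ P x = c := by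
  obtain ⟨x, hx, hxi⟩ : ∃ x ∈ X, x i = b := by
    obtain ⟨x, hx⟩ := h.nonempty
    by_cases hxi : x i = b
    · exact ⟨x, hx, hxi⟩
    · exact ⟨flipBit x i, h.flipBit_mem x hx i hi, by simpa [← Bool.eq_not] using hxi⟩
  by_cases hPx : P x = c
  · exact ⟨x, hx, hxi, hPx⟩
  · obtain ⟨j, hj, hji⟩ := T.exists_mem_ne hT i
    refine ⟨flipBit x j, h.flipBit_mem x hx j hj, by simpa [hji.symm] using hxi, ?_⟩
    rw [hP, Bool.not_eq.2 hPx]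

theorem output_flipBit (h : IsNDChain P v o T X S K) (hP : IsFullySensitive P) (hx : x ∈ X)
    (hy : y ∈ S) (hi : i ∈ T) (ho : o (x, y) = true) : o (flipBit x i, y) = false := by
  have hPx : P x = true := (h.computes x hx).2 ⟨y, hy, ho⟩
  refine Bool.eq_false_iff.2 fun ho' => ?_
  have hPx' := (h.computes _ (h.flipBit_mem x hx i hi)).2 ⟨y, hy, ho'⟩
  simp [hP x i, hPx] at hPx'

theorem output_not_eqOn_const (h : IsNDChain P v o T X S K) (hP : IsFullySensitive P)
    (hT : 1 < T.card) (hi : i ∈ T) (b c : Bool) :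
    ¬ Set.EqOn o (fun _ => c) ((X ∩ {x | x i = b}) ×ˢ S) := by
  intro hc
  obtain ⟨x, hx, hxi, hPx⟩ := h.exists_mem hP hT hi b true
  obtain ⟨x', hx', hxi', hPx'⟩ := h.exists_mem hP hT hi b false
  obtain ⟨y, hy, ho⟩ := (h.computes x hx).1 hPx
  have ho' : o (x', y) = true := by
    rw [hc (x := (x', y)) ⟨⟨hx', hxi'⟩, hy⟩, ← hc (x := (x, y)) ⟨⟨hx, hxi⟩, hy⟩, ho]
  simp [(h.computes x' hx').2 ⟨y, hy, ho'⟩] at hPx'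

theorem exists_output_gate (h : IsNDChain P v o T X S K) (hP : IsFullySensitive P)
    (hT : 1 < T.card) : ∃ k ∈ K, ∃ ψ : Bool → Bool, Set.EqOn o (fun p => ψ (v k p)) (X ×ˢ S) := by
  obtain ⟨i, hi⟩ := Finset.card_pos.1 (zero_lt_one.trans hT)
  obtain ⟨x, hx, -, hPx⟩ := h.exists_mem hP hT hi true true
  obtain ⟨y, hy, ho⟩ := (h.computes x hx).1 hPx
  obtain ⟨ψ, s, hs, hval⟩ := h.output
  have depends_on (j : ι) (hj : j ∈ T) : s.val v (flipBit x j, y) ≠ s.val v (x, y) := by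
    intro heq
    have ho' := h.output_flipBit hP hx hy hj ho
    rw [hval (x := (flipBit x j, y)) ⟨h.flipBit_mem x hx j hj, hy⟩] at ho'
    simp only [heq, ← hval (x := (x, y)) ⟨hx, hy⟩, ho, Bool.true_eq_false] at ho'
  cases s with
  | var l =>
    obtain ⟨j, hj, hjl⟩ := T.exists_mem_ne hT l
    exact absurd (Function.update_of_ne hjl.symm _ _) (depends_on j hj)
  | guess f => exact absurd rfl (depends_on i hi)
  | gate k => exact ⟨k, hs, ψ, hval⟩

end LT

theorem gate_flipBit_ne [Preorder G] [WellFoundedLT G] {k : G} (h : IsNDChain P v o T X S K)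
    (hP : IsFullySensitive P) (hT : 1 < T.card) (hi : i ∈ T) (W : BooleanChain v (X ×ˢ S) T K)
    (honly : ∀ l ∈ K, l ≠ k → ¬ W.Uses l (.var i)) (hx : x ∈ X) (hy : y ∈ S)
    (ho : o (x, y) = true) : v k (flipBit x i, y) ≠ v k (x, y) := by
  intro hk
  obtain ⟨out, hout, ψ, hψ⟩ := h.exists_output_gate hP hT
  have hp : (x, y) ∈ X ×ˢ S := ⟨hx, hy⟩
  have hp' : (flipBit x i, y) ∈ X ×ˢ S := ⟨h.flipBit_mem x hx i hi, hy⟩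
  have hout_eq : v out (flipBit x i, y) = v out (x, y) :=
    W.gate_eq_of_forall_ne_not_uses_var hp hp' (fun j hj => Function.update_of_ne hj _ _) hk honly
      hout
  have ho' := h.output_flipBit hP hx hy hi ho
  simp only [hψ hp', hout_eq, ← hψ hp, ho, Bool.true_eq_false] at ho'

section sdiff

variable [Preorder G] [DecidableEq G] [WellFoundedLT G] {R : Finset G}

theorem sdiff_of_guess_subset (h : IsNDChain P v o T X S K) (hS : S' ⊆ S)
    (hacc : ∀ x ∈ X, ∀ y ∈ S, o (x, y) = true → y ∈ S')
    (hR : ∀ k ∈ R, IsRedundant v (X ×ˢ S') T K k) : IsNDChain P v o T X S' (K \ R) := by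
  obtain ⟨W⟩ := h.chain
  have hD : X ×ˢ S' ⊆ X ×ˢ S := Set.prod_mono le_rfl hS
  have hvar (i : ι) (hi : i ∈ T) :
      (fun p => p.1 i) ∈ availableOn v (X ×ˢ S') T (∅ : Set G) :=
    GateSource.IsOver.val_mem_availableOn (s := .var i) hi
  refine ⟨h.nonempty, h.flipBit_mem, W.nonempty_sdiff hD hvar hR, ?_, fun x hx => ?_⟩
  · exact mem_availableOn_sdiff h.output hD hvar hR
  · rw [h.computes x hx]
    exact ⟨fun ⟨y, hy, ho⟩ => ⟨y, hacc x hx y hy ho, ho⟩, fun ⟨y, hy, ho⟩ => ⟨y, hS hy, ho⟩⟩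

theorem sdiff_of_fix_bit (h : IsNDChain P v o T X S K) (hP : IsFullySensitive P) (hT : 1 < T.card)
    (hi : i ∈ T) (b : Bool) (hR : ∀ k ∈ R, IsRedundant v ((X ∩ {x | x i = b}) ×ˢ S) T K k) :
    IsNDChain P v o (T.erase i) (X ∩ {x | x i = b}) S (K \ R) := by
  obtain ⟨W⟩ := h.chain
  have hD : (X ∩ {x | x i = b}) ×ˢ S ⊆ X ×ˢ S := Set.prod_mono Set.inter_subset_left le_rfl
  have hvar (j : ι) (hj : j ∈ T) : (fun p => p.1 j) ∈
      availableOn v ((X ∩ {x | x i = b}) ×ˢ S) (T.erase i) (∅ : Set G) := by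
    rcases eq_or_ne j i with rfl | hji
    · exact mem_availableOn_of_eqOn_const fun p hp => hp.1.2
    · exact GateSource.IsOver.val_mem_availableOn (s := .var j) (Finset.mem_erase.2 ⟨hji, hj⟩)
  obtain ⟨x, hx, hxi, -⟩ := h.exists_mem hP hT hi b true
  refine ⟨⟨x, hx, hxi⟩, fun x hx j hj => ?_, W.nonempty_sdiff hD hvar hR, ?_,
    fun x hx => h.computes x hx.1⟩
  · obtain ⟨hji, hj⟩ := Finset.mem_erase.1 hj
    exact ⟨h.flipBit_mem x hx.1 j hj, by simpa [hji.symm] using hx.2⟩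
  · exact mem_availableOn_sdiff h.output hD hvar hR

end sdiff

end IsNDChain

/-- An `IsNDChain` that remains none when gates are removed, even if guesses are excluded too. -/
structure IsIrreducibleNDChain [DecidableEq ι] [LT G] (P : (ι → Bool) → Bool)
    (v : G → (ι → Bool) × Y → Bool) (o : (ι → Bool) × Y → Bool) (T : Finset ι)
    (X : Set (ι → Bool)) (S : Set Y) (K : Finset G) : Prop extends IsNDChain P v o T X S K where
  not_isNDChain : ∀ K' ⊂ K, ∀ S' ⊆ S, ¬ IsNDChain P v o T X S' K'

namespace IsIrreducibleNDChain

variable [DecidableEq ι] [Preorder G] {P : (ι → Bool) → Bool} {v : G → (ι → Bool) × Y → Bool}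
  {o : (ι → Bool) × Y → Bool} {T : Finset ι} {X : Set (ι → Bool)} {S S' : Set Y} {K : Finset G}
  {W : BooleanChain v (X ×ˢ S) T K} {i : ι} {k : G}

theorem not_isRedundant_of_guess_subset [WellFoundedLT G]
    (h : IsIrreducibleNDChain P v o T X S K) (hS : S' ⊆ S)
    (hacc : ∀ x ∈ X, ∀ y ∈ S, o (x, y) = true → y ∈ S') (hk : k ∈ K) :
    ¬ IsRedundant v (X ×ˢ S') T K k := by
  classical
  intro hred
  refine h.not_isNDChain (K \ {k}) ?_ S' hS (h.sdiff_of_guess_subset hS hacc ?_)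
  · exact Finset.sdiff_ssubset (Finset.singleton_subset_iff.2 hk) (Finset.singleton_nonempty k)
  · exact fun l hl => Finset.mem_singleton.1 hl ▸ hred

theorem not_isRedundant [WellFoundedLT G] (h : IsIrreducibleNDChain P v o T X S K) (hk : k ∈ K) :
    ¬ IsRedundant v (X ×ˢ S) T K k :=
  h.not_isRedundant_of_guess_subset le_rfl (fun _ _ _ hy _ => hy) hk

variable (W) in
theorem exists_uses_of_eqOn_const (h : IsIrreducibleNDChain P v o T X S K)
    (hP : IsFullySensitive P) (hT : 1 < T.card) (hi : i ∈ T) (hk : k ∈ K) {b c : Bool}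
    (hc : Set.EqOn (v k) (fun _ => c) ((X ∩ {x | x i = b}) ×ˢ S)) :
    ∃ l ∈ K, W.Uses l (.gate k) := by
  classical
  obtain ⟨out, hout, ψ, ho⟩ := h.exists_output_gate hP hT
  have out_ne : out ≠ k := by
    rintro rfl
    refine h.output_not_eqOn_const hP hT hi b (ψ c) fun p hp => ?_
    rw [ho ⟨hp.1.1, hp.2⟩]
    exact congrArg ψ (hc hp)
  by_contra! hunused
  refine h.not_isNDChain (K.erase k) (Finset.erase_ssubset hk) S le_rfl
    ⟨h.nonempty, h.flipBit_mem, W.nonempty_erase hunused, ?_, h.computes⟩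
  exact ⟨ψ, .gate out, Finset.mem_erase.2 ⟨out_ne, hout⟩, ho⟩

variable (W) in
theorem exists_minimal_uses_var [WellFoundedLT G] (h : IsIrreducibleNDChain P v o T X S K)
    (hK : K.Nonempty) : ∃ g, Minimal (· ∈ K) g ∧ ∃ i ∈ T, W.Uses g (.var i) := by
  obtain ⟨g, hg⟩ := K.exists_minimal hK
  refine ⟨g, hg, ?_⟩
  have left_isOver : (W.left g).IsOver T ∅ := BooleanChain.Uses.isOver_empty (.inl rfl) hg
  have right_isOver : (W.right g).IsOver T ∅ := BooleanChain.Uses.isOver_empty (.inr rfl) hg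
  have eqOn := W.eqOn g hg.prop
  rcases hl : W.left g with i | f₁ | l
  · exact ⟨i, by rwa [hl] at left_isOver, .inl hl⟩
  · rcases hr : W.right g with i | f₂ | l
    · exact ⟨i, by rwa [hr] at right_isOver, .inr hr⟩
    · rw [hl, hr] at eqOn
      exact absurd ⟨id, .guess fun y => W.op g (f₁ y) (f₂ y), trivial, eqOn⟩
        (h.not_isRedundant hg.prop)
    · rw [hr] at right_isOver
      exact absurd right_isOver (Set.notMem_empty l)
  · rw [hl] at left_isOver
    exact absurd left_isOver (Set.notMem_empty l)

theorem exists_ne_uses_var [WellFoundedLT G] (h : IsIrreducibleNDChain P v o T X S K)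
    (hP : IsFullySensitive P) (hT : 1 < T.card) (hi : i ∈ T) (hk : Minimal (· ∈ K) k)
    (hki : W.Uses k (.var i)) : ∃ l ∈ K, l ≠ k ∧ W.Uses l (.var i) := by
  by_contra! honly
  obtain ⟨φ, t, -, huses, hval⟩ := hki.exists_other hk.prop
  have hkt : W.Uses k t := (huses t).2 (.inr rfl)
  have t_isOver : t.IsOver T ∅ := hkt.isOver_empty hk
  have t_ne : t ≠ .var i := by
    rintro rfl
    exact h.not_isRedundant hk.prop ⟨fun a => φ a a, .var i, hi, hval⟩
  obtain ⟨d, c, hd⟩ := hkt.exists_controlling_value hk.prop (h.not_isRedundant hk.prop)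
  -- If `t` had its controlling value `d`, flipping `x i` would leave gate `k`, hence the output,
  -- unchanged.
  have accepting (x) (hx : x ∈ X) (y) (hy : y ∈ S) (ho : o (x, y) = true) :
      t.val v (x, y) = !d := by
    refine Bool.eq_not.2 fun htd => h.gate_flipBit_ne hP hT hi W honly hx hy ho ?_
    have htd' : t.val v (flipBit x i, y) = d := (t_isOver.val_flipBit t_ne x y).trans htd
    rw [hd _ ⟨hx, hy⟩ htd, hd _ ⟨h.flipBit_mem x hx i hi, hy⟩ htd']
  cases t with
  | var j =>
    obtain ⟨x, hx, hxj, hPx⟩ := h.exists_mem hP hT t_isOver d true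
    obtain ⟨y, hy, ho⟩ := (h.computes x hx).1 hPx
    exact Bool.eq_not.1 (accepting x hx y hy ho) hxj
  | guess f =>
    refine h.not_isRedundant_of_guess_subset (S' := {y ∈ S | f y = !d}) (Set.sep_subset _ _)
      (fun x hx y hy ho => ⟨hy, accepting x hx y hy ho⟩) hk.prop ?_
    refine ⟨fun a => φ a !d, .var i, hi, fun p hp => ?_⟩
    have hfd : (GateSource.guess f : GateSource ι Y G).val v p = !d := hp.2.2
    simp only [hval ⟨hp.1, hp.2.1⟩, hfd]
  | gate l => exact Set.notMem_empty l t_isOver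

theorem exists_three_isRedundant [WellFoundedLT G]
    (h : IsIrreducibleNDChain P v o T X S K) (hP : IsFullySensitive P) (hT : 1 < T.card) :
    ∃ i ∈ T, ∃ b, ∃ R ⊆ K, R.card = 3 ∧
      ∀ k ∈ R, IsRedundant v ((X ∩ {x | x i = b}) ×ˢ S) T K k := by
  classical
  obtain ⟨W⟩ := h.chain
  obtain ⟨out, hout, -⟩ := h.exists_output_gate hP hT
  obtain ⟨g, hg, i, hi, hgi⟩ := h.exists_minimal_uses_var W ⟨out, hout⟩
  obtain ⟨l, hl, hlg, hli⟩ := h.exists_ne_uses_var hP hT hi hg hgi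
  obtain ⟨b, c, hbc⟩ := hgi.exists_controlling_value hg.prop (h.not_isRedundant hg.prop)
  have hD : (X ∩ {x | x i = b}) ×ˢ S ⊆ X ×ˢ S := Set.prod_mono Set.inter_subset_left le_rfl
  have i_const : Set.EqOn ((GateSource.var i : GateSource ι Y G).val v) (fun _ => b)
      ((X ∩ {x | x i = b}) ×ˢ S) := fun p hp => hp.1.2
  have g_const : Set.EqOn (v g) (fun _ => c) ((X ∩ {x | x i = b}) ×ˢ S) :=
    fun p hp => hbc p (hD hp) hp.1.2
  obtain ⟨m, hm, hmg, hml, hm_red⟩ : ∃ m ∈ K, m ≠ g ∧ m ≠ l ∧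
      IsRedundant v ((X ∩ {x | x i = b}) ×ˢ S) T K m := by
    obtain ⟨m, hm, hmg⟩ := h.exists_uses_of_eqOn_const W hP hT hi hg.prop g_const
    rcases eq_or_ne m l with rfl | hml
    · obtain ⟨d, m_const⟩ := hli.exists_eqOn_const hmg nofun hm hD i_const g_const
      obtain ⟨m', hm', hm'm⟩ := h.exists_uses_of_eqOn_const W hP hT hi hm m_const
      exact ⟨m', hm', ((hmg.lt hm).trans (hm'm.lt hm')).ne', (hm'm.lt hm').ne',
        hm'm.isRedundant hm' hD m_const⟩
    · exact ⟨m, hm, (hmg.lt hm).ne', hml, hmg.isRedundant hm hD g_const⟩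
  refine ⟨i, hi, b, {g, l, m}, ?_,
    Finset.card_eq_three.2 ⟨g, l, m, hlg.symm, hmg.symm, hml.symm, rfl⟩, ?_⟩
  · simp [Finset.insert_subset_iff, hg.prop, hl, hm]
  · simp only [Finset.mem_insert, Finset.mem_singleton]
    rintro k (rfl | rfl | rfl)
    · exact hgi.isRedundant hg.prop hD i_const
    · exact hli.isRedundant hl hD i_const
    · exact hm_red

end IsIrreducibleNDChain

theorem IsNDChain.three_mul_card_sub_one_le [DecidableEq ι] [Preorder G] [WellFoundedLT G]
    {P : (ι → Bool) → Bool} {v : G → (ι → Bool) × Y → Bool} {o : (ι → Bool) × Y → Bool}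
    {T : Finset ι} {X : Set (ι → Bool)} {S : Set Y} {K : Finset G}
    (h : IsNDChain P v o T X S K) (hP : IsFullySensitive P) : 3 * (T.card - 1) ≤ K.card := by
  classical
  induction K using Finset.strongInduction generalizing T X S with
  | H K ih =>
    rcases le_or_gt T.card 1 with hT | hT
    · omega
    by_cases hirr : ∀ K' ⊂ K, ∀ S' ⊆ S, ¬ IsNDChain P v o T X S' K'
    · obtain ⟨i, hi, b, R, hRK, hcard, hR⟩ :=
        IsIrreducibleNDChain.exists_three_isRedundant ⟨h, hirr⟩ hP hT
      have hR_nonempty : R.Nonempty := Finset.card_pos.1 (hcard ▸ three_pos)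
      have hRK_card : R.card ≤ K.card := Finset.card_le_card hRK
      have hssub : K \ R ⊂ K := Finset.sdiff_ssubset hRK hR_nonempty
      have hle := ih (K \ R) hssub (h.sdiff_of_fix_bit hP hT hi b hR)
      rw [Finset.card_erase_of_mem hi, Finset.card_sdiff_of_subset hRK] at hle
      omega
    · push Not at hirr
      obtain ⟨K', hK', S', -, h'⟩ := hirr
      exact (ih K' hK' h').trans (Finset.card_le_card hK'.subset)

namespace Circuit

variable {ι κ : Type}

/-- The source of a wire of a circuit with variables `ι` and guess bits `κ`. -/
def gateSource {s k : ℕ} (hk : k ≤ s) :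
    ((ι ⊕ κ) ⊕ Bool) ⊕ Fin k → GateSource ι (κ → Bool) (Fin s)
  | .inl (.inl (.inl i)) => .var i
  | .inl (.inl (.inr j)) => .guess fun y => y j
  | .inl (.inr b) => .guess fun _ => b
  | .inr h => .gate (h.castLE hk)

/-- The value of gate `g`, as a function of the variables and the guess. -/
def gateFun (C : Circuit (ι ⊕ κ)) (g : Fin C.size) (p : (ι → Bool) × (κ → Bool)) : Bool :=
  C.nodeVal (Sum.elim p.1 p.2) g

variable {C : Circuit (ι ⊕ κ)}

theorem val_gateSource {k : ℕ} (hk : k ≤ C.size) (w : ((ι ⊕ κ) ⊕ Bool) ⊕ Fin k)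
    (p : (ι → Bool) × (κ → Bool)) :
    (gateSource hk w).val C.gateFun p = C.wireVal hk (Sum.elim p.1 p.2) w := by
  rcases w with ((_ | _) | _) | _ <;> rfl

theorem gateSource_isOver [Fintype ι] {s k : ℕ} (hk : k ≤ s) (w : ((ι ⊕ κ) ⊕ Bool) ⊕ Fin k) :
    (gateSource hk w).IsOver Finset.univ {j : Fin s | j.val < k} := by
  rcases w with ((i | _) | _) | h
  · exact Finset.mem_univ i
  · trivial
  · trivial
  · exact h.isLt

/-- The wiring of a `U₂`-circuit. -/
def IsU2Circuit.booleanChain [Fintype ι] (hC : C.IsU2Circuit)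
    (D : Set ((ι → Bool) × (κ → Bool))) :
    BooleanChain C.gateFun D Finset.univ Finset.univ where
  op := C.gate
  left g := gateSource g.isLt.le (C.in1 g)
  right g := gateSource g.isLt.le (C.in2 g)
  isU2_op g _ := hC g
  left_isOver g _ := (gateSource_isOver _ _).mono fun j hj => ⟨Finset.mem_univ j, hj⟩
  right_isOver g _ := (gateSource_isOver _ _).mono fun j hj => ⟨Finset.mem_univ j, hj⟩
  eqOn g _ p _ := by
    simp only [val_gateSource]
    exact C.nodeVal_eq_gate_wireVal _ g

theorem IsU2Circuit.three_mul_card_sub_one_le_size [Fintype ι] [DecidableEq ι] (hC : C.IsU2Circuit)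
    {P : (ι → Bool) → Bool} (hP : IsFullySensitive P)
    (hCP : ∀ x, P x = true ↔ ∃ y : κ → Bool, C.eval (Sum.elim x y) = true) :
    3 * (Fintype.card ι - 1) ≤ C.size := by
  have h : IsNDChain P C.gateFun (fun p => C.eval (Sum.elim p.1 p.2)) Finset.univ Set.univ
      Set.univ Finset.univ :=
    { nonempty := Set.univ_nonempty
      flipBit_mem := fun _ _ _ _ => Set.mem_univ _
      chain := ⟨hC.booleanChain _⟩
      output := ⟨id, gateSource le_rfl C.out,
        (gateSource_isOver _ _).mono fun j _ => Finset.mem_coe.2 (Finset.mem_univ j),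
        fun p _ => by simp only [id, eval_eq_wireVal_out, val_gateSource]⟩
      computes := fun x _ => by simpa using hCP x }
  simpa using h.three_mul_card_sub_one_le hP

end Circuit

theorem isFullySensitive_parity (n : ℕ) : IsFullySensitive (parity n) := by
  intro x i
  have parity_eq (z : Fin n → Bool) :
      parity n z = xor (parityOn (Finset.univ.erase i) z) (z i) := by
    rw [← parityOn_cons (Finset.notMem_erase i _), Finset.cons_eq_insert,
      Finset.insert_erase (Finset.mem_univ i)]
    rfl
  have erase_eq : parityOn (Finset.univ.erase i) (flipBit x i) =
      parityOn (Finset.univ.erase i) x := by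
    have sum_eq : ∑ j ∈ Finset.univ.erase i, (flipBit x i j).toNat =
        ∑ j ∈ Finset.univ.erase i, (x j).toNat :=
      Finset.sum_congr rfl fun j hj =>
        congrArg Bool.toNat (Function.update_of_ne (Finset.ne_of_mem_erase hj) _ _)
    rw [parityOn, parityOn, sum_eq]
  have flip_eq : flipBit x i i = !x i := Function.update_self ..
  rw [parity_eq, parity_eq x, erase_eq, flip_eq, Bool.xor_not]

theorem exists_computesND_parity {n : ℕ} (hn : n ≠ 0) : ∃ C : Circuit (Fin n ⊕ Fin 0),
    C.IsU2Circuit ∧ C.ComputesND (parity n) ∧ C.size = 3 * (n - 1) := by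
  have : NeZero n := ⟨hn⟩
  obtain ⟨C, hU, hsize, hC⟩ := Circuit.exists_eval_eq_parityOn
    (s := Finset.univ.map (Function.Embedding.inl : Fin n ↪ Fin n ⊕ Fin 0))
    (Finset.univ_nonempty.map)
  refine ⟨C, hU, fun x => ?_, by simpa using hsize⟩
  simp [hC, parityOn, parity]

/-- For every `n ≥ 2`, the minimum size of a nondeterministic
`U₂`-circuit computing `Parity_n` equals `3(n-1)`; in particular nondeterminism
cannot reduce the `U₂`-circuit size of parity below the deterministic optimum. -/
theorem sizeNDC_parity (n : ℕ) (hn : 2 ≤ n) : sizeNDC (parity n) = 3 * (n - 1) := by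
  obtain ⟨C, hU, hC, hsize⟩ := exists_computesND_parity (n := n) (by omega)
  have mem : 3 * (n - 1) ∈ {s | ∃ m : ℕ, ∃ C : Circuit (Fin n ⊕ Fin m),
      C.IsU2Circuit ∧ C.ComputesND (parity n) ∧ C.size = s} := ⟨0, C, hU, hC, hsize⟩
  refine le_antisymm (Nat.sInf_le mem) (le_csInf ⟨_, mem⟩ ?_)
  rintro s ⟨m, C, hU, hC, rfl⟩
  simpa using hU.three_mul_card_sub_one_le_size (isFullySensitive_parity n) hC
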